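/- For general lines L_1,…,L_4 in P^3 (i.e., there exists a nonzero polynomial P in the 32 coordinates of spanning vectors a_1,b_1,…,a_4,b_4 ∈ ℂ^4 such that whenever P does not vanish, each pair a_i,b_i is linearly independent, the subspaces L_i = span{a_i,b_i} pairwise intersect only in 0, and the following holds): the ℂ-vector space of homogeneous polynomials F of degree 10 in ℂ[x_0,x_1,x_2,x_3] with F ∈ I(L_i)^3 for i = 1,…,4 has dimension exactly 56, although the virtual (expected) dimension is binom(13,3) − 4·58 = 286 − 232 = 54; hence 𝓛_{10}(3,3,3,3) is special. -/

import Mathlib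

open MvPolynomial

noncomputable section

abbrev C4 : Type := Fin 4 → ℂ
abbrev R3 : Type := MvPolynomial (Fin 4) ℂ

/-- The homogeneous ideal of the line in `P^3` corresponding to a linear subspace
`L ⊆ ℂ^4`: all polynomials vanishing identically on `L`. -/
def lineIdeal (L : Submodule ℂ C4) : Ideal R3 where
  carrier := {F | ∀ v ∈ L, eval v F = 0}
  add_mem' := by
    intro a b ha hb v hv
    simp [ha v hv, hb v hv]
  zero_mem' := by
    intro v hv
    simp
  smul_mem' := by
    intro c F hF v hv
    simp [smul_eq_mul, hF v hv]

/-- The linear system `𝓛_d(m_1, …, m_s)`: homogeneous forms of degree `d`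
vanishing to order `m i` along the line `L i`, as a `ℂ`-subspace. -/
def linSys (d : ℕ) {s : ℕ} (L : Fin s → Submodule ℂ C4) (m : Fin s → ℕ) :
    Submodule ℂ R3 :=
  homogeneousSubmodule (Fin 4) ℂ d ⊓
    ⨅ i, Submodule.restrictScalars ℂ ((lineIdeal (L i)) ^ (m i))

/-- A property `Q` holds for `s` *general* lines in `P^3`: there is a nonzero
polynomial `P` in the `8s` coordinates of spanning vectors such that whenever
`P` does not vanish, each pair of vectors is linearly independent, the spanned
planes are pairwise disjoint, and `Q` holds for these lines. -/
def GeneralLines (s : ℕ) (Q : (Fin s → Submodule ℂ C4) → Prop) : Prop :=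
  ∃ P : MvPolynomial (Fin s × Fin 2 × Fin 4) ℂ, P ≠ 0 ∧
    ∀ v : Fin s → Fin 2 → C4,
      MvPolynomial.eval (fun p => v p.1 p.2.1 p.2.2) P ≠ 0 →
      (∀ i, LinearIndependent ℂ ![v i 0, v i 1]) ∧
      (∀ i j, i ≠ j →
        Submodule.span ℂ {v i 0, v i 1} ⊓ Submodule.span ℂ {v j 0, v j 1} = ⊥) ∧
      Q (fun i => Submodule.span ℂ {v i 0, v i 1})

/-!
Four general lines of `P³` have two common transversals `T` and `T'`: they correspond to the row
eigenvectors of a `2 × 2` matrix with nonzero discriminant. In coordinates with `T = {y = 0}` and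
`T' = {x = 0}` each line joins a point `(1 : sᵢ)` of `T` to a point `(1 : tᵢ)` of `T'`, so its ideal
is bihomogeneous and `𝓛_d(m₁, …, m₄)` is the direct sum, over `a + b = d`, of the spaces of forms
of bidegree `(a, b)` on `P¹ × P¹` with multiplicity `mᵢ` at `(sᵢ, tᵢ)`.

For `d = 10` and four triple points these have dimension `max(0, (a + 1)(b + 1) - 24)`, that is
`0, 0, 3, 8, 11, 12, 11, 8, 3, 0, 0`, with sum `56`. Counting conditions gives the lower bound.
For the upper bound rulings through the points are split off one at a time, until the linear system
left over is visibly zero: the forms of bidegree `(1, 1)` through the four points, which lie on no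
common such curve because `T` and `T'` carry different cross-ratios. The four lines impose
`4 · 3 = 12` conditions on the `11` monomials of bidegree `(10, 0)`, and as many in bidegree
`(0, 10)`: this is the excess of `2` over the virtual dimension `54`.
-/

section CoordinateSubspace

variable {σ K : Type*} [DecidableEq σ] [Field K]

/-- The order of vanishing of `F` along the coordinate subspace `{v | ∀ i ∈ s, v i = 0}`: the
least degree in the variables of `s` of a monomial of `F`, and `⊤` for `F = 0`. Stated through
`MvPowerSeries.weightedOrder` because the latter is known to be a valuation. -/
def coordOrder (s : Finset σ) (F : MvPolynomial σ K) : ℕ∞ :=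
  (F : MvPowerSeries σ K).weightedOrder fun i => if i ∈ s then 1 else 0

variable {s : Finset σ} {F G : MvPolynomial σ K} {m : ℕ}

omit [Field K] in
lemma weight_ite_mem (d : σ →₀ ℕ) :
    Finsupp.weight (fun i => if i ∈ s then 1 else 0) d = ∑ i ∈ s, d i := by
  simp only [Finsupp.weight_apply, Finsupp.sum, smul_eq_mul, mul_ite, mul_one, mul_zero,
    Finset.sum_ite_mem, Finset.inter_comm d.support]
  exact Finset.sum_subset Finset.inter_subset_left fun i hi hid => by
    simpa [hi] using hid

lemma le_coordOrder_iff :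
    (m : ℕ∞) ≤ coordOrder s F ↔ ∀ d : σ →₀ ℕ, ∑ i ∈ s, d i < m → coeff d F = 0 := by
  simp only [← weight_ite_mem]
  refine ⟨fun h d hd => ?_, fun h => MvPowerSeries.nat_le_weightedOrder _ fun d hd => ?_⟩
  · rw [← coeff_coe]
    exact MvPowerSeries.coeff_eq_zero_of_lt_weightedOrder _ ((Nat.cast_lt.2 hd).trans_le h)
  · rw [coeff_coe, h d hd]

lemma coordOrder_le {d : σ →₀ ℕ} (hd : coeff d F ≠ 0) :
    coordOrder s F ≤ (∑ i ∈ s, d i : ℕ) := by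
  rw [← weight_ite_mem]
  exact MvPowerSeries.weightedOrder_le _ (by rwa [coeff_coe])

lemma coordOrder_mul : coordOrder s (F * G) = coordOrder s F + coordOrder s G := by
  rw [coordOrder, coe_mul, MvPowerSeries.weightedOrder_mul, coordOrder, coordOrder]

lemma le_coordOrder_of_mem_span_X_pow (hF : F ∈ Ideal.span (X '' (s : Set σ)) ^ m) :
    (m : ℕ∞) ≤ coordOrder s F := by
  induction m generalizing F with
  | zero => simp
  | succ m ih =>
    rw [pow_succ] at hF
    induction hF using Submodule.mul_induction_on' with
    | mem_mul_mem G hG H hH =>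
      have hH : ((1 : ℕ) : ℕ∞) ≤ coordOrder s H := le_coordOrder_iff.2 fun d hd => by
        by_contra hc
        obtain ⟨i, hi, hdi⟩ := mem_ideal_span_X_image.1 hH d (mem_support_iff.2 hc)
        exact hdi (Finset.sum_eq_zero_iff.1 (Nat.lt_one_iff.1 hd) i hi)
      rw [coordOrder_mul, Nat.cast_add]
      exact add_le_add (ih hG) hH
    | add G _ H _ hG hH =>
      rw [le_coordOrder_iff] at hG hH ⊢
      intro d hd
      rw [coeff_add, hG d hd, hH d hd, add_zero]

omit [DecidableEq σ] in
lemma monomial_mem_span_X_pow (d : σ →₀ ℕ) (c : K) :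
    monomial d c ∈ Ideal.span (X '' (s : Set σ)) ^ ∑ i ∈ s, d i := by
  classical
  have hle : ∑ i ∈ s, Finsupp.single i (d i) ≤ d := fun i => by
    simp only [Finsupp.finsetSum_apply, Finsupp.single_apply, Finset.sum_ite_eq']
    split_ifs <;> simp
  have hmem : ∏ i ∈ s, monomial (Finsupp.single i (d i)) (1 : K) ∈
      Ideal.span (X '' (s : Set σ)) ^ ∑ i ∈ s, d i := by
    rw [← Finset.prod_pow_eq_pow_sum]
    refine Ideal.prod_mem_prod fun i hi => ?_
    rw [← X_pow_eq_monomial]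
    exact Ideal.pow_mem_pow (Ideal.subset_span (Set.mem_image_of_mem X hi)) _
  have hsplit : monomial d c = monomial (d - ∑ i ∈ s, Finsupp.single i (d i)) c *
      ∏ i ∈ s, monomial (Finsupp.single i (d i)) (1 : K) := by
    rw [← monomial_sum_one, monomial_mul, tsub_add_cancel_of_le hle, mul_one]
  rw [hsplit]
  exact Ideal.mul_mem_left _ _ hmem

lemma mem_span_X_pow_iff :
    F ∈ Ideal.span (X '' (s : Set σ)) ^ m ↔ (m : ℕ∞) ≤ coordOrder s F := by
  refine ⟨le_coordOrder_of_mem_span_X_pow, fun h => ?_⟩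
  rw [← support_sum_monomial_coeff F]
  refine Ideal.sum_mem _ fun d hd => Ideal.pow_le_pow_right ?_ (monomial_mem_span_X_pow d _)
  by_contra! hlt
  exact mem_support_iff.1 hd (le_coordOrder_iff.1 h d hlt)

lemma le_coordOrder_rename {τ : Type*} [DecidableEq τ] (e : σ ≃ τ)
    (hF : (m : ℕ∞) ≤ coordOrder s F) :
    (m : ℕ∞) ≤ coordOrder (s.map e.toEmbedding) (rename e F) := by
  rw [← mem_span_X_pow_iff] at hF ⊢
  have := Ideal.mem_map_of_mem (rename e) hF
  rw [Ideal.map_pow, Ideal.map_span, ← Set.image_comp] at this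
  have himage : X '' (s.map e.toEmbedding : Set τ) =
      (rename e ∘ X : σ → MvPolynomial τ K) '' s := by
    simp [Set.image_image]
  rwa [himage]

omit [DecidableEq σ] in
lemma eval_eq_zero_of_mem_span_X (hF : F ∈ Ideal.span (X '' (s : Set σ))) {v : σ → K}
    (hv : ∀ i ∈ s, v i = 0) : eval v F = 0 := by
  have hle : Ideal.span (X '' (s : Set σ)) ≤ RingHom.ker (eval v) := by
    rw [Ideal.span_le]
    rintro _ ⟨i, hi, rfl⟩
    simpa [RingHom.mem_ker] using hv i hi
  exact hle hF

omit [DecidableEq σ] in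
lemma mem_span_X_iff_forall_eval [Infinite K] :
    F ∈ Ideal.span (X '' (s : Set σ)) ↔ ∀ v : σ → K, (∀ i ∈ s, v i = 0) → eval v F = 0 := by
  classical
  refine ⟨fun hF v hv => eval_eq_zero_of_mem_span_X hF hv, fun h => ?_⟩
  let I : Ideal (MvPolynomial σ K) := Ideal.span (X '' (s : Set σ))
  let restrict : MvPolynomial σ K →ₐ[K] MvPolynomial σ K :=
    aeval fun i => if i ∈ s then 0 else X i
  have hzero : restrict F = 0 := MvPolynomial.funext fun v => by
    rw [map_zero, ← h (fun i => if i ∈ s then 0 else v i) (fun i hi => if_pos hi)]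
    simp only [restrict, ← aeval_eq_eval, ← AlgHom.comp_apply]
    congr 1
    ext i
    by_cases hi : i ∈ s <;> simp [hi]
  have hcomp : (Ideal.Quotient.mkₐ K I).comp restrict = Ideal.Quotient.mkₐ K I := by
    ext i
    by_cases hi : i ∈ s
    · have hX : Ideal.Quotient.mk I (X i) = 0 := Ideal.Quotient.eq_zero_iff_mem.2
        (Ideal.subset_span (Set.mem_image_of_mem X hi))
      simp [restrict, hi, hX]
    · simp [restrict, hi]
  rw [← Ideal.Quotient.eq_zero_iff_mem]
  have := DFunLike.congr_fun hcomp F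
  simpa [hzero, eq_comm] using this

end CoordinateSubspace

section WeightedHomogeneous

variable {σ τ R M : Type*} [CommSemiring R] [AddCommMonoid M] {w : σ → M} {w' : τ → M}
  {g : σ → MvPolynomial τ R}

lemma isWeightedHomogeneous_aeval {F : MvPolynomial σ R} {n : M}
    (hF : IsWeightedHomogeneous w F n) (hg : ∀ i, IsWeightedHomogeneous w' (g i) (w i)) :
    IsWeightedHomogeneous w' (aeval g F) n := by
  induction hF using IsWeightedHomogeneous.induction_on with
  | zero => rw [map_zero]; exact isWeightedHomogeneous_zero R w' n
  | add F G _ _ hF hG => rw [map_add]; exact hF.add hG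
  | monomial d c hd =>
    rw [aeval_monomial, algebraMap_eq, ← hd]
    exact (IsWeightedHomogeneous.prod _ _ _ fun i _ => (hg i).pow (d i)).C_mul c

lemma weightedHomogeneousComponent_aeval
    (hg : ∀ i, IsWeightedHomogeneous w' (g i) (w i)) (n : M) (F : MvPolynomial σ R) :
    weightedHomogeneousComponent w' n (aeval g F) =
      aeval g (weightedHomogeneousComponent w n F) := by
  classical
  induction F using MvPolynomial.induction_on' with
  | monomial d c =>
    have hd := isWeightedHomogeneous_monomial w d c rfl
    rw [weightedHomogeneousComponent_of_mem hd,
      weightedHomogeneousComponent_of_mem (isWeightedHomogeneous_aeval hd hg)]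
    split_ifs <;> simp
  | add F G hF hG => simp only [map_add, hF, hG]

end WeightedHomogeneous

section Bihomogeneous

open Sum (inl inr)
open Finset.HasAntidiagonal (antidiagonal)

/-- The bihomogeneous coordinate ring of `P¹ × P¹`: the variables `inl 0, inl 1` are the
coordinates of the first factor, `inr 0, inr 1` those of the second. -/
abbrev BiRing (K : Type*) [CommSemiring K] : Type _ := MvPolynomial (Fin 2 ⊕ Fin 2) K

/-- The weights for which weighted homogeneous of weight `(a, b)` means bihomogeneous of
bidegree `(a, b)`. -/
def bidegree : Fin 2 ⊕ Fin 2 → ℕ × ℕ := Sum.elim (fun _ => (1, 0)) (fun _ => (0, 1))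

lemma weight_bidegree (d : Fin 2 ⊕ Fin 2 →₀ ℕ) :
    Finsupp.weight bidegree d = (d (inl 0) + d (inl 1), d (inr 0) + d (inr 1)) := by
  simp [Finsupp.weight_apply, Finsupp.sum_fintype, bidegree, -nsmul_eq_mul]

/-- The exponent of the monomial `x₀ ^ p.1 * x₁ ^ p.2 * y₀ ^ q.1 * y₁ ^ q.2`. -/
def biexponent (p q : ℕ × ℕ) : Fin 2 ⊕ Fin 2 →₀ ℕ :=
  Finsupp.equivFunOnFinite.symm (Sum.elim ![p.1, p.2] ![q.1, q.2])

lemma eq_biexponent_iff {d : Fin 2 ⊕ Fin 2 →₀ ℕ} {p q : ℕ × ℕ} :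
    d = biexponent p q ↔ (d (inl 0), d (inl 1)) = p ∧ (d (inr 0), d (inr 1)) = q := by
  simp [Finsupp.ext_iff, biexponent, Prod.ext_iff]

/-- The exponents of the monomials of bidegree `(a, b)`. -/
def biexponentEquiv (a b : ℕ) :
    {d : Fin 2 ⊕ Fin 2 →₀ ℕ | Finsupp.weight bidegree d = (a, b)} ≃
      ↥(antidiagonal a ×ˢ antidiagonal b) where
  toFun d := ⟨((d.1 (inl 0), d.1 (inl 1)), (d.1 (inr 0), d.1 (inr 1))), by
    simpa [weight_bidegree] using d.2⟩
  invFun p := ⟨biexponent p.1.1 p.1.2, by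
    obtain ⟨ha, hb⟩ := Finset.mem_product.1 p.2
    simpa [weight_bidegree, biexponent] using And.intro ha hb⟩
  left_inv d := Subtype.ext (eq_biexponent_iff.2 ⟨rfl, rfl⟩).symm
  right_inv p := Subtype.ext rfl

/-- The monomial basis of the space of forms of bidegree `(a, b)`. -/
def bihomogeneousBasis (K : Type*) [Field K] (a b : ℕ) :
    Module.Basis ↥(antidiagonal a ×ˢ antidiagonal b) K
      (weightedHomogeneousSubmodule K bidegree (a, b)) :=
  ((basisRestrictSupport K _).map (LinearEquiv.ofEq _ _
    (weightedHomogeneousSubmodule_eq_finsupp_supported K bidegree (a, b)).symm)).reindex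
    (biexponentEquiv a b)

instance (K : Type*) [Field K] (a b : ℕ) :
    Module.Finite K (weightedHomogeneousSubmodule K bidegree (a, b)) :=
  .of_basis (bihomogeneousBasis K a b)

lemma finrank_bihomogeneous (K : Type*) [Field K] (a b : ℕ) :
    Module.finrank K (weightedHomogeneousSubmodule K bidegree (a, b)) = (a + 1) * (b + 1) := by
  rw [Module.finrank_eq_card_basis (bihomogeneousBasis K a b), Fintype.card_coe,
    Finset.card_product, Finset.Nat.card_antidiagonal, Finset.Nat.card_antidiagonal]

variable {K : Type*} [Field K]

/-- The automorphism of `BiRing K` induced by the affine shears `x₁ ↦ x₁ + s x₀`,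
`y₁ ↦ y₁ + t y₀`, which carry the point `((1 : 0), (1 : 0))` to `((1 : s), (1 : t))`. -/
def shear (s t : K) : BiRing K →ₐ[K] BiRing K :=
  aeval (Sum.elim ![X (inl 0), X (inl 1) + C s * X (inl 0)]
    ![X (inr 0), X (inr 1) + C t * X (inr 0)])

lemma shear_shear (s t s' t' : K) (F : BiRing K) :
    shear s t (shear s' t' F) = shear (s + s') (t + t') F := by
  rw [← AlgHom.comp_apply]
  congr 1
  ext i : 1
  rcases i with i | i <;> fin_cases i <;> simp [shear] <;> ring

lemma shear_zero (F : BiRing K) : shear 0 0 F = F := by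
  conv_rhs => rw [← AlgHom.id_apply (R := K) F]
  congr 1
  ext i : 1
  rcases i with i | i <;> fin_cases i <;> simp [shear]

lemma eval_shear (s t : K) (v : Fin 2 ⊕ Fin 2 → K) (F : BiRing K) :
    eval v (shear s t F) = eval (Sum.elim ![v (inl 0), v (inl 1) + s * v (inl 0)]
      ![v (inr 0), v (inr 1) + t * v (inr 0)]) F := by
  simp only [← aeval_eq_eval, ← AlgHom.comp_apply]
  congr 1
  ext i
  rcases i with i | i <;> fin_cases i <;> simp [shear]

lemma isWeightedHomogeneous_shear_X (s t : K) (i : Fin 2 ⊕ Fin 2) :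
    IsWeightedHomogeneous bidegree
      (Sum.elim ![X (inl 0), X (inl 1) + C s * X (inl 0)]
        ![X (inr 0), X (inr 1) + C t * X (inr 0)] i : BiRing K) (bidegree i) := by
  have hX (i) : IsWeightedHomogeneous bidegree (X i : BiRing K) (bidegree i) :=
    isWeightedHomogeneous_X K bidegree i
  rcases i with i | i <;> fin_cases i
  exacts [hX _, (hX (inl 1)).add ((hX (inl 0)).C_mul s),
    hX _, (hX (inr 1)).add ((hX (inr 0)).C_mul t)]

lemma isWeightedHomogeneous_shear {s t : K} {F : BiRing K} {n : ℕ × ℕ}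
    (hF : IsWeightedHomogeneous bidegree F n) : IsWeightedHomogeneous bidegree (shear s t F) n :=
  isWeightedHomogeneous_aeval hF (isWeightedHomogeneous_shear_X s t)

lemma weightedHomogeneousComponent_shear (s t : K) (n : ℕ × ℕ) (F : BiRing K) :
    weightedHomogeneousComponent bidegree n (shear s t F) =
      shear s t (weightedHomogeneousComponent bidegree n F) :=
  weightedHomogeneousComponent_aeval (isWeightedHomogeneous_shear_X s t) n F

/-- The multiplicity at the point `((1 : s), (1 : t))` of `P¹ × P¹` of the curve cut out by `F`
(`⊤` for `F = 0`), computed after moving the point to the origin of the affine chart. -/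
def pointOrder (s t : K) (F : BiRing K) : ℕ∞ := coordOrder {inl 1, inr 1} (shear s t F)

lemma pointOrder_mul (s t : K) (F G : BiRing K) :
    pointOrder s t (F * G) = pointOrder s t F + pointOrder s t G := by
  rw [pointOrder, map_mul, coordOrder_mul, pointOrder, pointOrder]

lemma le_pointOrder_iff {s t : K} {F : BiRing K} {m : ℕ} : (m : ℕ∞) ≤ pointOrder s t F ↔
    ∀ d : Fin 2 ⊕ Fin 2 →₀ ℕ, d (inl 1) + d (inr 1) < m → coeff d (shear s t F) = 0 := by
  simp [pointOrder, le_coordOrder_iff]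

/-- The equation of the ruling `{(1 : s)} × P¹`. -/
def ruling (s : K) : BiRing K := X (inl 1) - C s * X (inl 0)

lemma pointOrder_ruling_le_one (s t : K) : pointOrder s t (ruling s) ≤ 1 := by
  refine (coordOrder_le (d := Finsupp.single (inl 1) 1) ?_).trans (by simp)
  simp [ruling, shear]

lemma pointOrder_ruling_of_ne {s s' : K} (h : s' ≠ s) (t : K) :
    pointOrder s' t (ruling s) = 0 := by
  refine nonpos_iff_eq_zero.1 ((coordOrder_le (d := Finsupp.single (inl 0) 1) ?_).trans (by simp))
  simpa [ruling, shear, coeff_X, sub_eq_zero, Finsupp.single_left_inj] using h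

end Bihomogeneous

section LinearAlgebra

open Module

variable {K E κ : Type*} [Field K] [AddCommGroup E] [Module K E] [Fintype κ]

lemma finrank_le_card_add_finrank (φ : κ → E →ₗ[K] K) (V W : Submodule K E)
    [Module.Finite K V] [Module.Finite K W] (h : ∀ x ∈ V, (∀ k, φ k x = 0) → x ∈ W) :
    finrank K V ≤ Fintype.card κ + finrank K W := by
  let f : V →ₗ[K] κ → K := (LinearMap.pi φ).domRestrict V
  have hker : finrank K (LinearMap.ker f) ≤ finrank K W := by
    rw [← Submodule.finrank_map_subtype_eq]
    refine Submodule.finrank_mono ?_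
    rintro _ ⟨x, hx, rfl⟩
    exact h x x.2 fun k => congrFun hx k
  have hrange : finrank K (LinearMap.range f) ≤ Fintype.card κ :=
    (Submodule.finrank_le _).trans (finrank_fintype_fun_eq_card K).le
  have := f.finrank_range_add_finrank_ker
  omega

end LinearAlgebra

section BiSystem

open Module
open Sum (inl inr)
open Finset.HasAntidiagonal (antidiagonal)

variable {ι K : Type*} [Field K]

/-- The forms of bidegree `(a, b)` on `P¹ × P¹` with multiplicity at least `m i` at the point
`((1 : s i), (1 : t i))` for each `i`. -/
def biSystem (s t : ι → K) (a b : ℕ) (m : ι → ℕ) : Submodule K (BiRing K) where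
  carrier := {F | IsWeightedHomogeneous bidegree F (a, b) ∧
    ∀ i, (m i : ℕ∞) ≤ pointOrder (s i) (t i) F}
  zero_mem' := ⟨isWeightedHomogeneous_zero K _ _, fun i => le_pointOrder_iff.2 (by simp)⟩
  add_mem' := fun ⟨hF, hFm⟩ ⟨hG, hGm⟩ => ⟨hF.add hG, fun i => le_pointOrder_iff.2 fun d hd => by
    rw [map_add, coeff_add, le_pointOrder_iff.1 (hFm i) d hd, le_pointOrder_iff.1 (hGm i) d hd,
      add_zero]⟩
  smul_mem' := fun c F ⟨hF, hFm⟩ =>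
    ⟨(weightedHomogeneousSubmodule K bidegree (a, b)).smul_mem c hF, fun i =>
      le_pointOrder_iff.2 fun d hd => by
        rw [map_smul, coeff_smul, le_pointOrder_iff.1 (hFm i) d hd, smul_zero]⟩

variable {s t : ι → K} {a b : ℕ} {m : ι → ℕ}

instance : Module.Finite K (biSystem s t a b m) :=
  Submodule.finiteDimensional_of_le (S₂ := weightedHomogeneousSubmodule K bidegree (a, b))
    fun _ hF => hF.1

lemma coeff_eq_zero_of_ne_biexponent {F : BiRing K}
    (hF : IsWeightedHomogeneous bidegree F (a, b)) {d : Fin 2 ⊕ Fin 2 →₀ ℕ}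
    (hd : d ≠ biexponent (a - d (inl 1), d (inl 1)) (b - d (inr 1), d (inr 1))) :
    coeff d F = 0 := by
  refine hF.coeff_eq_zero d fun hw => hd (eq_biexponent_iff.2 ?_)
  rw [weight_bidegree, Prod.mk.injEq] at hw
  rw [← hw.1, ← hw.2, Nat.add_sub_cancel, Nat.add_sub_cancel]
  exact ⟨rfl, rfl⟩

lemma card_sigma_antidiagonal (m : ℕ) :
    ((Finset.range m).sigma antidiagonal).card = (m + 1).choose 2 := by
  rw [Finset.card_sigma]
  simp only [Finset.Nat.card_antidiagonal]
  induction m with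
  | zero => rfl
  | succ m ih =>
    rw [Finset.sum_range_succ, ih, Nat.choose_succ_succ' (m + 1), Nat.choose_one_right, add_comm]

lemma le_finrank_biSystem_add [Fintype ι] (s t : ι → K) (a b : ℕ) (m : ι → ℕ) :
    (a + 1) * (b + 1) ≤ finrank K (biSystem s t a b m) + ∑ i, (m i + 1).choose 2 := by
  let κ := Σ i, ↥((Finset.range (m i)).sigma antidiagonal)
  let φ : κ → BiRing K →ₗ[K] K := fun k =>
    (lcoeff K (biexponent (a - k.2.1.2.1, k.2.1.2.1) (b - k.2.1.2.2, k.2.1.2.2))).comp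
      (shear (s k.1) (t k.1)).toLinearMap
  have hκ : Fintype.card κ = ∑ i, (m i + 1).choose 2 := by
    simp only [κ, Fintype.card_sigma, Fintype.card_coe, card_sigma_antidiagonal]
  rw [← finrank_bihomogeneous K a b, ← hκ, add_comm]
  refine finrank_le_card_add_finrank φ _ _ fun F hF hφ => ⟨hF, fun i => ?_⟩
  refine le_pointOrder_iff.2 fun d hd => ?_
  by_cases hdab : d = biexponent (a - d (inl 1), d (inl 1)) (b - d (inr 1), d (inr 1))
  · rw [hdab]
    exact hφ ⟨i, ⟨d (inl 1) + d (inr 1), d (inl 1), d (inr 1)⟩, by simpa using hd⟩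
  · exact coeff_eq_zero_of_ne_biexponent (isWeightedHomogeneous_shear hF) hdab

lemma shear_rename_swap (s t : K) (F : BiRing K) :
    shear t s (rename Sum.swap F) = rename Sum.swap (shear s t F) := by
  rw [← AlgHom.comp_apply, ← AlgHom.comp_apply]
  congr 1
  ext i : 1
  rcases i with i | i <;> fin_cases i <;> simp [shear]

lemma rename_swap_mem_biSystem {F : BiRing K} (hF : F ∈ biSystem s t a b m) :
    rename Sum.swap F ∈ biSystem t s b a m := by
  refine ⟨fun d hd => ?_, fun i => ?_⟩
  · obtain ⟨e, rfl, he⟩ := coeff_rename_ne_zero _ _ _ hd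
    have hmap (i) : e.mapDomain Sum.swap (Sum.swap i) = e i :=
      Finsupp.mapDomain_apply Sum.swap_leftInverse.injective e i
    have hinl (i) : e.mapDomain Sum.swap (inl i) = e (inr i) := hmap (inr i)
    have hinr (i) : e.mapDomain Sum.swap (inr i) = e (inl i) := hmap (inl i)
    have hw := hF.1 he
    rw [weight_bidegree, Prod.mk.injEq] at hw ⊢
    simpa only [hinl, hinr] using hw.symm
  · have hmap : ({inl 1, inr 1} : Finset (Fin 2 ⊕ Fin 2)).map
        (Equiv.sumComm (Fin 2) (Fin 2)).toEmbedding = {inl 1, inr 1} := by decide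
    rw [pointOrder, shear_rename_swap, ← hmap]
    exact le_coordOrder_rename (Equiv.sumComm _ _) (hF.2 i)

lemma finrank_biSystem_swap :
    finrank K (biSystem s t a b m) = finrank K (biSystem t s b a m) := by
  have hle (s t : ι → K) (a b : ℕ) :
      finrank K (biSystem s t a b m) ≤ finrank K (biSystem t s b a m) :=
    LinearMap.finrank_le_finrank_of_injective
      (f := (rename Sum.swap).toLinearMap.restrict fun _ hF => rename_swap_mem_biSystem hF)
      fun _ _ h => Subtype.ext
        (rename_injective _ Sum.swap_leftInverse.injective (congrArg Subtype.val h))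
  exact (hle s t a b).antisymm (hle t s b a)

lemma exists_eq_ruling_mul {s t : K} {F : BiRing K}
    (hF : IsWeightedHomogeneous bidegree F (a + 1, b))
    (hcoeff : ∀ k ≤ b, coeff (biexponent (a + 1, 0) (b - k, k)) (shear s t F) = 0) :
    ∃ G, IsWeightedHomogeneous bidegree G (a, b) ∧ F = ruling s * G := by
  have hsF := isWeightedHomogeneous_shear (s := s) (t := t) hF
  have hdvd : X (inl 1) ∣ shear s t F := by
    rw [← Ideal.mem_span_singleton, ← Set.image_singleton, mem_ideal_span_X_image]
    refine fun d hd => ⟨inl 1, rfl, fun h0 => mem_support_iff.1 hd ?_⟩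
    have hw := hsF (mem_support_iff.1 hd)
    rw [weight_bidegree, Prod.mk.injEq] at hw
    convert hcoeff (d (inr 1)) (by omega)
    exact eq_biexponent_iff.2 ⟨Prod.ext (by lia) h0, Prod.ext (by lia) rfl⟩
  obtain ⟨H, hH⟩ := hdvd
  have hHhom : IsWeightedHomogeneous bidegree H (a, b) := fun d hd => by
    have hw := hsF (d := Finsupp.single (inl 1) 1 + d) (by rwa [hH, coeff_X_mul])
    rw [weight_bidegree, Prod.mk.injEq] at hw ⊢
    simp only [Finsupp.add_apply, Finsupp.single_eq_same, ne_eq, reduceCtorEq,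
      not_false_eq_true, Finsupp.single_eq_of_ne, Sum.inl.injEq, zero_ne_one] at hw
    omega
  refine ⟨shear (-s) (-t) H, isWeightedHomogeneous_shear hHhom, ?_⟩
  calc F = shear (-s) (-t) (shear s t F) := by
        rw [shear_shear, neg_add_cancel, neg_add_cancel, shear_zero]
    _ = ruling s * shear (-s) (-t) H := by
        rw [hH, map_mul]
        simp [ruling, shear, sub_eq_add_neg]

/- Restricted to the ruling through the `i`-th point, a form of the larger system is a binary form
of degree `b` with a root of order `> m i`; if the restriction vanishes, the ruling splits off. -/
lemma finrank_biSystem_succ_le [DecidableEq ι] (hs : Function.Injective s) (t : ι → K) (a b : ℕ)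
    (m : ι → ℕ) (i : ι) :
    finrank K (biSystem s t (a + 1) b (m + Pi.single i 1)) ≤
      (b - m i) + finrank K (biSystem s t a b m) := by
  let φ : Fin (b - m i) → BiRing K →ₗ[K] K := fun j =>
    (lcoeff K (biexponent (a + 1, 0) (b - (m i + 1 + j), m i + 1 + j))).comp
      (shear (s i) (t i)).toLinearMap
  refine (finrank_le_card_add_finrank φ _
    ((biSystem s t a b m).map (LinearMap.mulLeft K (ruling (s i)))) fun F hF hφ => ?_).trans
    (add_le_add (Fintype.card_fin _).le (Submodule.finrank_map_le _ _))
  have hmi := hF.2 i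
  rw [Pi.add_apply, Pi.single_eq_same] at hmi
  obtain ⟨G, hG, rfl⟩ := exists_eq_ruling_mul (s := s i) (t := t i) hF.1 fun k hk => by
    rcases lt_or_ge k (m i + 1) with hlt | hge
    · exact le_pointOrder_iff.1 hmi _ (by simpa [biexponent] using hlt)
    · simpa [φ, Nat.add_sub_cancel' hge] using hφ ⟨k - (m i + 1), by omega⟩
  refine ⟨G, ⟨hG, fun j => ?_⟩, rfl⟩
  by_cases hji : j = i
  · subst hji
    rw [pointOrder_mul, Nat.cast_add, Nat.cast_one, add_comm (m j : ℕ∞)] at hmi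
    exact (ENat.add_le_add_iff_left ENat.one_ne_top).1
      (hmi.trans (by gcongr; exact pointOrder_ruling_le_one _ _))
  · have hmj := hF.2 j
    rwa [pointOrder_mul, pointOrder_ruling_of_ne (hs.ne hji), zero_add, Pi.add_apply,
      Pi.single_eq_of_ne hji, add_zero] at hmj

lemma finrank_biSystem_add_card_left_le [DecidableEq ι] (hs : Function.Injective s) (t : ι → K)
    (a b : ℕ) (m : ι → ℕ) (T : Finset ι) {m' : ι → ℕ}
    (hm' : ∀ i, m' i = m i + if i ∈ T then 1 else 0) :
    finrank K (biSystem s t (a + T.card) b m') ≤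
      ∑ i ∈ T, (b - m i) + finrank K (biSystem s t a b m) := by
  obtain rfl : m' = fun i => m i + if i ∈ T then 1 else 0 := funext hm'
  clear hm'
  induction T using Finset.induction_on with
  | empty =>
    simp only [Finset.card_empty, Finset.sum_empty, zero_add]
    exact le_rfl
  | insert j T hj ih =>
    have hsplit : (fun i => m i + if i ∈ insert j T then 1 else 0) =
        (fun i => m i + if i ∈ T then 1 else 0) + Pi.single j 1 := by
      ext i
      by_cases hij : i = j
      · subst hij
        simp [hj]
      · simp [hij]
    rw [hsplit, Finset.card_insert_of_notMem hj, Finset.sum_insert hj, ← add_assoc a, add_assoc]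
    refine (finrank_biSystem_succ_le hs t _ b _ j).trans ?_
    rw [if_neg hj, add_zero, add_assoc]
    exact add_le_add_right ih _

lemma finrank_biSystem_add_card_right_le [DecidableEq ι] (s : ι → K) (ht : Function.Injective t)
    (a b : ℕ) (m : ι → ℕ) (T : Finset ι) {m' : ι → ℕ}
    (hm' : ∀ i, m' i = m i + if i ∈ T then 1 else 0) :
    finrank K (biSystem s t a (b + T.card) m') ≤
      ∑ i ∈ T, (a - m i) + finrank K (biSystem s t a b m) := by
  rw [finrank_biSystem_swap, finrank_biSystem_swap (s := s)]
  exact finrank_biSystem_add_card_left_le ht s b a m T hm'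

lemma eval_eq_zero_of_one_le_pointOrder {s t : K} {F : BiRing K} (hF : 1 ≤ pointOrder s t F) :
    eval (Sum.elim ![1, s] ![1, t]) F = 0 := by
  have hmem : shear s t F ∈
      Ideal.span (X '' (({inl 1, inr 1} : Finset (Fin 2 ⊕ Fin 2)) : Set (Fin 2 ⊕ Fin 2))) := by
    rw [← pow_one (Ideal.span _), mem_span_X_pow_iff]
    exact_mod_cast hF
  rw [← eval_eq_zero_of_mem_span_X hmem (v := Sum.elim ![1, 0] ![1, 0]) (by simp), eval_shear]
  simp

lemma eval_eq_sum_biexponent {F : BiRing K} (hF : IsWeightedHomogeneous bidegree F (a, b))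
    (v : Fin 2 ⊕ Fin 2 → K) :
    eval v F = ∑ p ∈ antidiagonal a, ∑ q ∈ antidiagonal b, coeff (biexponent p q) F *
      (v (inl 0) ^ p.1 * v (inl 1) ^ p.2 * (v (inr 0) ^ q.1 * v (inr 1) ^ q.2)) := by
  have hsupp : F.support ⊆ (antidiagonal a ×ˢ antidiagonal b).image fun p =>
      biexponent p.1 p.2 := fun d hd => by
    have hw := hF (mem_support_iff.1 hd)
    rw [weight_bidegree, Prod.mk.injEq] at hw
    exact Finset.mem_image.2 ⟨((d (inl 0), d (inl 1)), (d (inr 0), d (inr 1))), by simpa using hw,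
      (eq_biexponent_iff.2 ⟨rfl, rfl⟩).symm⟩
  have hinj : Function.Injective fun p : (ℕ × ℕ) × (ℕ × ℕ) => biexponent p.1 p.2 := fun p q h => by
    obtain ⟨h₁, h₂⟩ := eq_biexponent_iff.1 h
    exact Prod.ext h₁ h₂
  rw [eval_eq', Finset.sum_subset hsupp fun d _ hd => by rw [notMem_support_iff.1 hd, zero_mul],
    Finset.sum_image hinj.injOn, Finset.sum_product]
  simp [biexponent]

lemma eq_zero_of_coeff_biexponent_eq_zero {F : BiRing K}
    (hF : IsWeightedHomogeneous bidegree F (a, b))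
    (h : ∀ p ∈ antidiagonal a, ∀ q ∈ antidiagonal b, coeff (biexponent p q) F = 0) : F = 0 := by
  ext d
  by_contra hd
  have hw := hF hd
  rw [weight_bidegree, Prod.mk.injEq] at hw
  have hd' : d = biexponent (d (inl 0), d (inl 1)) (d (inr 0), d (inr 1)) :=
    eq_biexponent_iff.2 ⟨rfl, rfl⟩
  rw [hd'] at hd
  exact hd (h _ (by simpa using hw.1) _ (by simpa using hw.2))

lemma biSystem_zero_zero_eq_bot {i : ι} (hi : m i ≠ 0) : biSystem s t 0 0 m = ⊥ := by
  refine (Submodule.eq_bot_iff _).2 fun F hF => eq_zero_of_coeff_biexponent_eq_zero hF.1 ?_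
  have hm : 1 ≤ pointOrder (s i) (t i) F :=
    le_trans (by exact_mod_cast Nat.one_le_iff_ne_zero.2 hi) (hF.2 i)
  simpa [eval_eq_sum_biexponent hF.1] using eval_eq_zero_of_one_le_pointOrder hm

/- A form of bidegree `(1, 1)` restricts to a binary quadratic form on the diagonal; vanishing at
three points there, it is a multiple of the equation of the diagonal. -/
lemma biSystem_one_one_eq_bot {i j k l : ι} (hij : s i ≠ s j) (hik : s i ≠ s k) (hjk : s j ≠ s k)
    (hi : t i = s i) (hj : t j = s j) (hk : t k = s k) (hl : t l ≠ s l) :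
    biSystem s t 1 1 (fun _ => 1) = ⊥ := by
  refine (Submodule.eq_bot_iff _).2 fun F hF => eq_zero_of_coeff_biexponent_eq_zero hF.1 ?_
  have hanti : antidiagonal 1 = {(0, 1), (1, 0)} := rfl
  set α := coeff (biexponent (1, 0) (1, 0)) F with hα
  set β := coeff (biexponent (1, 0) (0, 1)) F with hβ
  set γ := coeff (biexponent (0, 1) (1, 0)) F with hγ
  set δ := coeff (biexponent (0, 1) (0, 1)) F with hδ
  have heval (n : ι) : α + β * t n + γ * s n + δ * (s n * t n) = 0 := by
    rw [← eval_eq_zero_of_one_le_pointOrder (by exact_mod_cast hF.2 n), eval_eq_sum_biexponent hF.1,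
      hanti, Finset.sum_pair (by decide), Finset.sum_pair (by decide), Finset.sum_pair (by decide)]
    simp
    ring
  have hdiff {p q : ι} (hpq : s p ≠ s q) (hp : t p = s p) (hq : t q = s q) :
      β + γ + δ * (s p + s q) = 0 := by
    refine (mul_eq_zero.1 ?_).resolve_left (sub_ne_zero.2 hpq)
    have hevp := heval p
    have hevq := heval q
    rw [hp] at hevp
    rw [hq] at hevq
    linear_combination hevp - hevq
  have hδ0 : δ = 0 := by
    refine (mul_eq_zero.1 ?_).resolve_right (sub_ne_zero.2 hjk)
    linear_combination hdiff hij hi hj - hdiff hik hi hk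
  have hβγ : β + γ = 0 := by simpa [hδ0] using hdiff hij hi hj
  have hα0 : α = 0 := by
    have := heval i
    rw [hi] at this
    linear_combination this - s i * hβγ - s i * s i * hδ0
  have hβ0 : β = 0 := by
    refine (mul_eq_zero.1 ?_).resolve_right (sub_ne_zero.2 hl)
    linear_combination heval l - hα0 - s l * hβγ - s l * t l * hδ0
  have hγ0 : γ = 0 := by rwa [hβ0, zero_add] at hβγ
  simp [hanti, ← hα, ← hβ, ← hγ, ← hδ, hα0, hβ0, hγ0, hδ0]

/-- A normal form for four points `((1 : s i), (1 : t i))` of `P¹ × P¹` in general position: no two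
lie on a common ruling, three lie on the diagonal and the last one does not. -/
structure FourPoints (s t : Fin 4 → K) : Prop where
  injective_left : Function.Injective s
  injective_right : Function.Injective t
  eq_of_ne_three : ∀ i ≠ 3, t i = s i
  ne_three : t 3 ≠ s 3

namespace FourPoints

variable {s t : Fin 4 → K}

omit [Field K] in
lemma symm (h : FourPoints s t) : FourPoints t s :=
  ⟨h.injective_right, h.injective_left, fun i hi => (h.eq_of_ne_three i hi).symm, h.ne_three.symm⟩

lemma finrank_one_one (h : FourPoints s t) : finrank K (biSystem s t 1 1 fun _ => 1) = 0 := by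
  rw [biSystem_one_one_eq_bot (i := 0) (j := 1) (k := 2) (l := 3)
    (h.injective_left.ne (by decide)) (h.injective_left.ne (by decide))
    (h.injective_left.ne (by decide)) (h.eq_of_ne_three 0 (by decide))
    (h.eq_of_ne_three 1 (by decide)) (h.eq_of_ne_three 2 (by decide)) h.ne_three, finrank_bot]

lemma finrank_zero_six (h : FourPoints s t) : finrank K (biSystem s t 0 6 fun _ => 2) = 0 := by
  have peel₁ := finrank_biSystem_add_card_right_le s h.injective_right 0 2 (fun _ => 1) Finset.univ
    (m' := fun _ => 2) (by decide)
  have peel₂ := finrank_biSystem_add_card_right_le s h.injective_right 0 0 ![0, 0, 1, 1] {0, 1}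
    (m' := fun _ => 1) (by decide)
  rw [biSystem_zero_zero_eq_bot (i := 2) (by decide), finrank_bot] at peel₂
  exact Nat.le_zero.1 (peel₁.trans (Nat.add_le_add_left peel₂ _))

lemma finrank_one_five (h : FourPoints s t) : finrank K (biSystem s t 1 5 fun _ => 2) = 0 := by
  have peel := finrank_biSystem_add_card_right_le s h.injective_right 1 1 (fun _ => 1) Finset.univ
    (m' := fun _ => 2) (by decide)
  rw [h.finrank_one_one] at peel
  exact Nat.le_zero.1 peel

lemma finrank_two_one (h : FourPoints s t) :
    finrank K (biSystem s t 2 1 ![1, 1, 1, 2]) = 0 := by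
  have peel := finrank_biSystem_add_card_left_le h.injective_left t 1 1 (fun _ => 1) {3}
    (m' := ![1, 1, 1, 2]) (by decide)
  rw [h.finrank_one_one] at peel
  exact Nat.le_zero.1 peel

lemma finrank_four_two_le (h : FourPoints s t) :
    finrank K (biSystem s t 4 2 fun _ => 2) ≤ 3 := by
  have peel₁ := finrank_biSystem_add_card_left_le h.injective_left t 2 2 ![1, 1, 2, 2] {0, 1}
    (m' := fun _ => 2) (by decide)
  have peel₂ := finrank_biSystem_add_card_right_le s h.injective_right 2 1 ![1, 1, 1, 2] {2}
    (m' := ![1, 1, 2, 2]) (by decide)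
  rw [h.finrank_two_one] at peel₂
  exact peel₁.trans (Nat.add_le_add_left peel₂ _)

lemma finrank_three_three_le (h : FourPoints s t) :
    finrank K (biSystem s t 3 3 fun _ => 2) ≤ 4 := by
  have peel₁ := finrank_biSystem_add_card_left_le h.injective_left t 2 3 ![1, 2, 2, 2] {0}
    (m' := fun _ => 2) (by decide)
  have peel₂ := finrank_biSystem_add_card_right_le s h.injective_right 2 1 ![1, 1, 1, 2] {1, 2}
    (m' := ![1, 2, 2, 2]) (by decide)
  rw [h.finrank_two_one] at peel₂
  exact peel₁.trans (Nat.add_le_add_left peel₂ _)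

lemma finrank_double_le (h : FourPoints s t) {a b : ℕ} (hab : a + b = 6) :
    finrank K (biSystem s t a b fun _ => 2) ≤ (a + 1) * (b + 1) - 12 := by
  wlog hle : a ≤ b generalizing a b s t
  · rw [finrank_biSystem_swap, mul_comm]
    exact this h.symm (by omega) (by omega)
  obtain rfl : b = 6 - a := by omega
  have ha : a ≤ 3 := by omega
  interval_cases a
  · exact h.finrank_zero_six.le
  · exact h.finrank_one_five.le
  · exact finrank_biSystem_swap.trans_le h.symm.finrank_four_two_le
  · exact h.finrank_three_three_le

lemma finrank_triple_le (h : FourPoints s t) {a b : ℕ} (hab : a + b = 10) :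
    finrank K (biSystem s t a b fun _ => 3) ≤ (a + 1) * (b + 1) - 24 := by
  wlog hle : a ≤ b generalizing a b s t
  · rw [finrank_biSystem_swap, mul_comm]
    exact this h.symm (by omega) (by omega)
  obtain ⟨b, rfl⟩ : ∃ b', b = b' + 4 := ⟨b - 4, by omega⟩
  have peel := finrank_biSystem_add_card_right_le s h.injective_right a b (fun _ => 2) Finset.univ
    (m' := fun _ => 3) (by decide)
  refine (peel.trans (Nat.add_le_add_left (h.finrank_double_le (by omega)) _)).trans ?_
  obtain rfl : b = 6 - a := by omega
  have ha : a ≤ 5 := by omega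
  interval_cases a <;> decide

/- The truncation in `ℕ` matters for bidegrees `(0, 10)`, `(1, 9)` and their transposes: `24`
exceeds the number of monomials there, and the conditions fail to be independent. -/
lemma finrank_triple (h : FourPoints s t) {a b : ℕ} (hab : a + b = 10) :
    finrank K (biSystem s t a b fun _ => 3) = (a + 1) * (b + 1) - 24 := by
  refine (h.finrank_triple_le hab).antisymm (Nat.sub_le_iff_le_add.2 ?_)
  simpa [Nat.choose] using le_finrank_biSystem_add s t a b fun _ => 3

lemma sum_finrank_triple (h : FourPoints s t) :
    ∑ p ∈ antidiagonal 10, finrank K (biSystem s t p.1 p.2 fun _ => 3) = 56 := by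
  rw [Finset.sum_congr rfl fun p hp =>
    h.finrank_triple (Finset.HasAntidiagonal.mem_antidiagonal.1 hp)]
  decide

end FourPoints

end BiSystem

section Pullback

variable {σ τ K : Type*} [Fintype σ] [DecidableEq σ] [Field K]

/-- Substitution of a linear map into a polynomial function: `F ↦ F ∘ φ`. -/
def pullback (φ : (σ → K) →ₗ[K] τ → K) : MvPolynomial τ K →ₐ[K] MvPolynomial σ K :=
  aeval fun j => ∑ i, C (φ (Pi.single i 1) j) * X i

lemma eval_pullback (φ : (σ → K) →ₗ[K] τ → K) (v : σ → K) (F : MvPolynomial τ K) :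
    eval v (pullback φ F) = eval (φ v) F := by
  simp only [pullback, ← aeval_eq_eval, ← AlgHom.comp_apply]
  congr 1
  ext j
  conv_rhs => rw [LinearMap.pi_apply_eq_sum_univ φ v]
  simp [← Pi.single_apply, mul_comm, Pi.single_comm]

lemma isHomogeneous_pullback (φ : (σ → K) →ₗ[K] τ → K) {F : MvPolynomial τ K} {d : ℕ}
    (hF : F.IsHomogeneous d) : (pullback φ F).IsHomogeneous d := by
  have := hF.aeval (fun j => ∑ i, C (φ (Pi.single i 1) j) * X i) (n := 1) fun j =>
    IsHomogeneous.sum _ _ _ fun i _ => (isHomogeneous_X K i).C_mul _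
  rwa [one_mul] at this

variable [Infinite K] [Fintype τ] [DecidableEq τ]

/-- The linear change of coordinates `F ↦ F ∘ φ` given by a linear equivalence `φ`. -/
def pullbackEquiv (φ : (σ → K) ≃ₗ[K] τ → K) : MvPolynomial τ K ≃ₐ[K] MvPolynomial σ K :=
  AlgEquiv.ofAlgHom (pullback φ.toLinearMap) (pullback φ.symm.toLinearMap)
    (AlgHom.ext fun F => MvPolynomial.funext fun v => by simp [eval_pullback])
    (AlgHom.ext fun F => MvPolynomial.funext fun v => by simp [eval_pullback])

lemma eval_pullbackEquiv (φ : (σ → K) ≃ₗ[K] τ → K) (v : σ → K) (F : MvPolynomial τ K) :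
    eval v (pullbackEquiv φ F) = eval (φ v) F :=
  eval_pullback φ.toLinearMap v F

lemma isHomogeneous_pullbackEquiv_iff (φ : (σ → K) ≃ₗ[K] τ → K) {F : MvPolynomial τ K} {d : ℕ} :
    (pullbackEquiv φ F).IsHomogeneous d ↔ F.IsHomogeneous d := by
  refine ⟨fun h => ?_, isHomogeneous_pullback _⟩
  rw [← (pullbackEquiv φ).symm_apply_apply F]
  exact isHomogeneous_pullback φ.symm.toLinearMap h

end Pullback

section BidegreeDecomposition

open Sum (inl inr)
open Finset.HasAntidiagonal (antidiagonal)

variable {K : Type*} [Field K] {F : BiRing K} {s t : K} {a b d m : ℕ}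

lemma degree_eq_weight_bidegree (n : Fin 2 ⊕ Fin 2 →₀ ℕ) :
    n.degree = (Finsupp.weight bidegree n).1 + (Finsupp.weight bidegree n).2 := by
  simp [weight_bidegree, Finsupp.degree_eq_sum]

lemma isHomogeneous_add_of_bihomogeneous (hF : IsWeightedHomogeneous bidegree F (a, b)) :
    F.IsHomogeneous (a + b) := fun n hn => by
  rw [Pi.one_def, ← Finsupp.degree_eq_weight_one, degree_eq_weight_bidegree, hF hn]

lemma sum_weightedHomogeneousComponent_bidegree (hF : F.IsHomogeneous d) :
    ∑ p ∈ antidiagonal d, weightedHomogeneousComponent bidegree p F = F := by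
  ext n
  simp only [coeff_sum, coeff_weightedHomogeneousComponent, Finset.sum_ite_eq]
  refine ite_eq_left_iff.2 fun hn => (hF.coeff_eq_zero fun hd => hn ?_).symm
  rw [Finset.HasAntidiagonal.mem_antidiagonal, ← degree_eq_weight_bidegree, hd]

lemma le_pointOrder_weightedHomogeneousComponent (hF : (m : ℕ∞) ≤ pointOrder s t F) (p : ℕ × ℕ) :
    (m : ℕ∞) ≤ pointOrder s t (weightedHomogeneousComponent bidegree p F) := by
  refine le_pointOrder_iff.2 fun n hn => ?_
  rw [← weightedHomogeneousComponent_shear, coeff_weightedHomogeneousComponent,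
    le_pointOrder_iff.1 hF n hn, ite_self]

lemma le_pointOrder_sum {κ : Type*} (S : Finset κ) {G : κ → BiRing K}
    (hG : ∀ k ∈ S, (m : ℕ∞) ≤ pointOrder s t (G k)) :
    (m : ℕ∞) ≤ pointOrder s t (∑ k ∈ S, G k) := by
  refine le_pointOrder_iff.2 fun n hn => ?_
  rw [map_sum, coeff_sum]
  exact Finset.sum_eq_zero fun k hk => le_pointOrder_iff.1 (hG k hk) n hn

end BidegreeDecomposition

section TransversalLines

open Module
open Sum (inl inr)
open Finset.HasAntidiagonal (antidiagonal)

lemma mem_lineIdeal_pow_iff {σ : Type*} [DecidableEq σ] {S : Finset σ}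
    (Φ : R3 ≃ₐ[ℂ] MvPolynomial σ ℂ) {φ : (σ → ℂ) → C4}
    (hφ : ∀ v F, eval v (Φ F) = eval (φ v) F) {L : Submodule ℂ C4}
    (hL : (L : Set C4) = φ '' {v | ∀ i ∈ S, v i = 0}) {F : R3} {m : ℕ} :
    F ∈ lineIdeal L ^ m ↔ (m : ℕ∞) ≤ coordOrder S (Φ F) := by
  have hmap : (lineIdeal L).map Φ = Ideal.span (X '' (S : Set σ)) := by
    ext G
    obtain ⟨F, rfl⟩ := Φ.surjective G
    have hmem : F ∈ lineIdeal L ↔ ∀ v ∈ (L : Set C4), eval v F = 0 := Iff.rfl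
    rw [mem_span_X_iff_forall_eval, Ideal.mem_map_of_equiv]
    simp [hφ, hmem, hL]
  rw [← mem_span_X_pow_iff, ← hmap, ← Ideal.map_pow, Ideal.mem_map_of_equiv]
  simp

/-- The automorphism `shear s t`. -/
def shearEquiv (s t : ℂ) : BiRing ℂ ≃ₐ[ℂ] BiRing ℂ :=
  AlgEquiv.ofAlgHom (shear s t) (shear (-s) (-t))
    (AlgHom.ext fun F => by simp [shear_shear, shear_zero])
    (AlgHom.ext fun F => by simp [shear_shear, shear_zero])

/-- The line joining the points `(1 : s)` and `(1 : t)` of the two skew lines spanned by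
`e (inl 0), e (inl 1)` and by `e (inr 0), e (inr 1)`. -/
def transversalLine (e : Fin 2 ⊕ Fin 2 → C4) (s t : ℂ) : Submodule ℂ C4 :=
  Submodule.span ℂ {e (inl 0) + s • e (inl 1), e (inr 0) + t • e (inr 1)}

variable (e : Basis (Fin 2 ⊕ Fin 2) ℂ C4) {F : R3} {d m : ℕ}

/-- Forms on `P³` in the coordinates of the frame `e`. -/
def frameEquiv : R3 ≃ₐ[ℂ] BiRing ℂ := pullbackEquiv e.equivFun.symm

lemma mem_lineIdeal_transversalLine_pow_iff (s t : ℂ) :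
    F ∈ lineIdeal (transversalLine e s t) ^ m ↔ (m : ℕ∞) ≤ pointOrder s t (frameEquiv e F) := by
  let move (v : Fin 2 ⊕ Fin 2 → ℂ) : Fin 2 ⊕ Fin 2 → ℂ :=
    Sum.elim ![v (inl 0), v (inl 1) + s * v (inl 0)] ![v (inr 0), v (inr 1) + t * v (inr 0)]
  refine mem_lineIdeal_pow_iff ((frameEquiv e).trans (shearEquiv s t))
    (φ := fun v => e.equivFun.symm (move v)) (fun v F => ?_) ?_
  · exact (eval_shear s t v _).trans (eval_pullbackEquiv _ _ _)
  · ext w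
    rw [transversalLine, SetLike.mem_coe, Submodule.mem_span_pair]
    constructor
    · rintro ⟨α, β, rfl⟩
      refine ⟨Sum.elim ![α, 0] ![β, 0], by simp, ?_⟩
      simp [move, Basis.equivFun_symm_apply, smul_smul, mul_comm]
    · rintro ⟨v, hv, rfl⟩
      have hv : v (inl 1) = 0 ∧ v (inr 1) = 0 := by simpa using hv
      refine ⟨v (inl 0), v (inr 0), ?_⟩
      simp [move, Basis.equivFun_symm_apply, hv, smul_smul, mul_comm]

variable {n : ℕ} {s t : Fin n → ℂ} {m : Fin n → ℕ}

lemma mem_linSys_transversalLine_iff :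
    F ∈ linSys d (fun i => transversalLine e (s i) (t i)) m ↔ (frameEquiv e F).IsHomogeneous d ∧
      ∀ i, (m i : ℕ∞) ≤ pointOrder (s i) (t i) (frameEquiv e F) := by
  simp only [linSys, Submodule.mem_inf, Submodule.mem_iInf, Submodule.restrictScalars_mem,
    mem_homogeneousSubmodule, mem_lineIdeal_transversalLine_pow_iff, frameEquiv,
    isHomogeneous_pullbackEquiv_iff]

/-- A system of surfaces with multiplicities along transversal lines splits into its bihomogeneous
parts. -/
def linSysEquiv (d : ℕ) (s t : Fin n → ℂ) (m : Fin n → ℕ) :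
    linSys d (fun i => transversalLine e (s i) (t i)) m ≃ₗ[ℂ]
      ((p : ↥(antidiagonal d)) → biSystem s t p.1.1 p.1.2 m) where
  toFun F p := ⟨weightedHomogeneousComponent bidegree p.1 (frameEquiv e F.1),
    weightedHomogeneousComponent_isWeightedHomogeneous _ _, fun i =>
      le_pointOrder_weightedHomogeneousComponent
        (((mem_linSys_transversalLine_iff e).1 F.2).2 i) _⟩
  invFun G := ⟨(frameEquiv e).symm (∑ p, (G p).1), by
    rw [mem_linSys_transversalLine_iff, AlgEquiv.apply_symm_apply]
    refine ⟨IsHomogeneous.sum _ _ _ fun p _ => ?_, fun i =>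
      le_pointOrder_sum _ fun p _ => (G p).2.2 i⟩
    have hp := isHomogeneous_add_of_bihomogeneous (G p).2.1
    rwa [Finset.HasAntidiagonal.mem_antidiagonal.1 p.2] at hp⟩
  map_add' F G := by ext; simp
  map_smul' c F := by ext; simp
  left_inv F := Subtype.ext <| (frameEquiv e).symm_apply_eq.2 <|
    (Finset.sum_coe_sort _ fun p => weightedHomogeneousComponent bidegree p _).trans
      (sum_weightedHomogeneousComponent_bidegree ((mem_linSys_transversalLine_iff e).1 F.2).1)
  right_inv G := by
    ext p : 2
    simp only [AlgEquiv.apply_symm_apply, map_sum]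
    rw [Finset.sum_congr rfl fun q _ =>
      weightedHomogeneousComponent_of_mem (m := p.1) (G q).2.1]
    simp

lemma finrank_linSys_transversalLine (d : ℕ) (s t : Fin n → ℂ) (m : Fin n → ℕ) :
    finrank ℂ (linSys d (fun i => transversalLine e (s i) (t i)) m) =
      ∑ p ∈ antidiagonal d, finrank ℂ (biSystem s t p.1 p.2 m) := by
  rw [(linSysEquiv e d s t m).finrank_eq, finrank_pi_fintype]
  exact Finset.sum_coe_sort _ fun p : ℕ × ℕ => finrank ℂ (biSystem s t p.1 p.2 m)

end TransversalLines

section CommonTransversals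

open Module
open Sum (inl inr)

/-- `p`, `q`, `p + q` and `p + ρ q` are four points of a line that meets each of the `L i`, with
cross-ratio `ρ`. -/
structure IsTransversal (L : Fin 4 → Submodule ℂ C4) (p q : C4) (ρ : ℂ) : Prop where
  mem_zero : p ∈ L 0
  mem_one : q ∈ L 1
  mem_two : p + q ∈ L 2
  mem_three : p + ρ • q ∈ L 3

namespace IsTransversal

variable {L : Fin 4 → Submodule ℂ C4} {p q : C4} {ρ : ℂ}

lemma ne_zero (h : IsTransversal L p q ρ) (hp : p ≠ 0) (h03 : L 0 ⊓ L 3 = ⊥) : ρ ≠ 0 := by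
  rintro rfl
  have hp3 : p ∈ L 3 := by simpa using h.mem_three
  exact hp ((Submodule.mem_bot ℂ).1 (h03.le ⟨h.mem_zero, hp3⟩))

lemma ne_one (h : IsTransversal L p q ρ) (hp : p ≠ 0) (h01 : L 0 ⊓ L 1 = ⊥)
    (h23 : L 2 ⊓ L 3 = ⊥) : ρ ≠ 1 := by
  rintro rfl
  have hpq3 : p + q ∈ L 3 := by simpa using h.mem_three
  have hpq : p + q = 0 := (Submodule.mem_bot ℂ).1 (h23.le ⟨h.mem_two, hpq3⟩)
  have hp1 : p ∈ L 1 := eq_neg_of_add_eq_zero_left hpq ▸ (L 1).neg_mem h.mem_one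
  exact hp ((Submodule.mem_bot ℂ).1 (h01.le ⟨h.mem_zero, hp1⟩))

end IsTransversal

/-- The affine coordinates, in the basis `p, p + c q`, of the points `p`, `q`, `p + q` and
`p + ρ q`. The parameter `c` keeps the four points away from the point at infinity. -/
def chartCoord (c ρ : ℂ) : Fin 4 → ℂ := ![0, -1, 1 / (c - 1), ρ / (c - ρ)]

lemma chartCoord_injective {c ρ : ℂ} (hc0 : c ≠ 0) (hc1 : c ≠ 1) (hcρ : c ≠ ρ) (hρ0 : ρ ≠ 0)
    (hρ1 : ρ ≠ 1) : Function.Injective (chartCoord c ρ) := by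
  have hc1' := sub_ne_zero.2 hc1
  have hcρ' := sub_ne_zero.2 hcρ
  have h12 : -1 ≠ 1 / (c - 1) := fun h => hc0 (by field_simp at h; linear_combination -h)
  have h13 : -1 ≠ ρ / (c - ρ) := fun h => hc0 (by field_simp at h; linear_combination -h)
  have h23 : 1 / (c - 1) ≠ ρ / (c - ρ) := fun h => by
    field_simp at h
    exact hρ1 (mul_left_cancel₀ hc0 (by linear_combination -h))
  have hlt : ∀ i j, i < j → chartCoord c ρ i ≠ chartCoord c ρ j := by
    intro i j hij
    fin_cases i <;> fin_cases j <;> first | exact absurd hij (by decide) | skip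
    exacts [by simp [chartCoord], (one_div_ne_zero hc1').symm, (div_ne_zero hρ0 hcρ').symm,
      h12, h13, h23]
  refine fun i j hij => by_contra fun hne => ?_
  exact (lt_or_gt_of_ne hne).elim (fun h => hlt i j h hij) fun h => hlt j i h hij.symm

lemma chartCoord_three_injective {c ρ ρ' : ℂ} (hc0 : c ≠ 0) (hcρ : c ≠ ρ) (hcρ' : c ≠ ρ')
    (h : chartCoord c ρ 3 = chartCoord c ρ' 3) : ρ = ρ' := by
  have hcρ := sub_ne_zero.2 hcρ
  have hcρ' := sub_ne_zero.2 hcρ'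
  replace h : ρ / (c - ρ) = ρ' / (c - ρ') := h
  field_simp at h
  exact mul_left_cancel₀ hc0 (by linear_combination h)

lemma fourPoints_chartCoord {c ρ ρ' : ℂ} (hc0 : c ≠ 0) (hc1 : c ≠ 1) (hcρ : c ≠ ρ)
    (hcρ' : c ≠ ρ') (hρ0 : ρ ≠ 0) (hρ1 : ρ ≠ 1) (hρ0' : ρ' ≠ 0) (hρ1' : ρ' ≠ 1) (hne : ρ ≠ ρ') :
    FourPoints (chartCoord c ρ) (chartCoord c ρ') where
  injective_left := chartCoord_injective hc0 hc1 hcρ hρ0 hρ1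
  injective_right := chartCoord_injective hc0 hc1 hcρ' hρ0' hρ1'
  eq_of_ne_three i hi := by
    fin_cases i
    exacts [rfl, rfl, rfl, absurd rfl hi]
  ne_three h := hne (chartCoord_three_injective hc0 hcρ hcρ' h.symm)

lemma IsTransversal.add_chartCoord_smul_mem {L : Fin 4 → Submodule ℂ C4} {p q : C4} {ρ c : ℂ}
    (h : IsTransversal L p q ρ) (hc1 : c ≠ 1) (hcρ : c ≠ ρ) (i : Fin 4) :
    p + chartCoord c ρ i • (p + c • q) ∈ L i := by
  have hpoint {x : ℂ} (hx : c ≠ x) :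
      p + (x / (c - x)) • (p + c • q) = (c / (c - x)) • (p + x • q) := by
    have := sub_ne_zero.2 hx
    match_scalars <;> field_simp
    ring
  fin_cases i
  · simpa [chartCoord] using h.mem_zero
  · simpa [chartCoord] using (L 1).smul_mem c h.mem_one
  · have h2 := (L 2).smul_mem (c / (c - 1)) h.mem_two
    have hpoint := hpoint hc1
    rw [one_smul] at hpoint
    rwa [← hpoint] at h2
  · have h3 := (L 3).smul_mem (c / (c - ρ)) h.mem_three
    rwa [← hpoint hcρ] at h3

/-- The frame adapted to the transversals through `p, q` and through `p', q'`. -/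
def transversalFrame (p q p' q' : C4) (c : ℂ) : Fin 2 ⊕ Fin 2 → C4 :=
  Sum.elim ![p, p + c • q] ![p', p' + c • q']

lemma linearIndependent_transversalFrame {p q p' q' : C4} {c : ℂ} {L₀ L₁ : Submodule ℂ C4}
    (hL : L₀ ⊓ L₁ = ⊥) (hp : p ∈ L₀) (hp' : p' ∈ L₀) (hq : q ∈ L₁) (hq' : q' ∈ L₁)
    (hpp : LinearIndependent ℂ ![p, p']) (hqq : LinearIndependent ℂ ![q, q']) (hc : c ≠ 0) :
    LinearIndependent ℂ (transversalFrame p q p' q' c) := by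
  rw [LinearIndependent.pair_iff] at hpp hqq
  refine Fintype.linearIndependent_iff.2 fun g hg => ?_
  have hsum : ((g (inl 0) + g (inl 1)) • p + (g (inr 0) + g (inr 1)) • p') +
      ((g (inl 1) * c) • q + (g (inr 1) * c) • q') = 0 := by
    rw [← hg]
    simp only [transversalFrame, Fintype.sum_sum_type, Fin.sum_univ_two, Sum.elim_inl, Sum.elim_inr,
      Matrix.cons_val_zero, Matrix.cons_val_one]
    module
  have hp0 := L₀.add_mem (L₀.smul_mem (g (inl 0) + g (inl 1)) hp)
    (L₀.smul_mem (g (inr 0) + g (inr 1)) hp')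
  have hq0 := L₁.add_mem (L₁.smul_mem (g (inl 1) * c) hq) (L₁.smul_mem (g (inr 1) * c) hq')
  have hpzero := (Submodule.mem_bot ℂ).1
    (hL.le ⟨hp0, eq_neg_of_add_eq_zero_left hsum ▸ L₁.neg_mem hq0⟩)
  rw [hpzero, zero_add] at hsum
  obtain ⟨hl1, hr1⟩ := hqq _ _ hsum
  obtain ⟨hl0, hr0⟩ := hpp _ _ hpzero
  replace hl1 := (mul_eq_zero.1 hl1).resolve_right hc
  replace hr1 := (mul_eq_zero.1 hr1).resolve_right hc
  rw [hl1, add_zero] at hl0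
  rw [hr1, add_zero] at hr0
  rintro (i | i) <;> fin_cases i <;> assumption

lemma finrank_transversalLine (e : Basis (Fin 2 ⊕ Fin 2) ℂ C4) (s t : ℂ) :
    finrank ℂ (transversalLine e s t) = 2 := by
  have hindep : LinearIndependent ℂ ![e (inl 0) + s • e (inl 1), e (inr 0) + t • e (inr 1)] := by
    refine LinearIndependent.pair_iff.2 fun a b hab => ?_
    have hcoord (i) := congrArg (fun w => e.repr w i) hab
    exact ⟨by simpa using hcoord (inl 0), by simpa using hcoord (inr 0)⟩
  have := finrank_span_eq_card hindep
  rwa [Matrix.range_cons_cons_empty, Fintype.card_fin] at this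

lemma finrank_linSys_triple_of_isTransversal {L : Fin 4 → Submodule ℂ C4}
    (hL : ∀ i, finrank ℂ (L i) ≤ 2) (hdisj : ∀ i j, i ≠ j → L i ⊓ L j = ⊥)
    {p q p' q' : C4} {ρ ρ' : ℂ} (h : IsTransversal L p q ρ) (h' : IsTransversal L p' q' ρ')
    (hρ : ρ ≠ ρ') (hpp : LinearIndependent ℂ ![p, p']) (hqq : LinearIndependent ℂ ![q, q']) :
    finrank ℂ (linSys 10 L fun _ => 3) = 56 := by
  have hρ0 := h.ne_zero (hpp.ne_zero 0) (hdisj 0 3 (by decide))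
  have hρ0' := h'.ne_zero (hpp.ne_zero 1) (hdisj 0 3 (by decide))
  have hρ1 := h.ne_one (hpp.ne_zero 0) (hdisj 0 1 (by decide)) (hdisj 2 3 (by decide))
  have hρ1' := h'.ne_one (hpp.ne_zero 1) (hdisj 0 1 (by decide)) (hdisj 2 3 (by decide))
  obtain ⟨c, hc⟩ := Infinite.exists_notMem_finset ({0, 1, ρ, ρ'} : Finset ℂ)
  simp only [Finset.mem_insert, Finset.mem_singleton, not_or] at hc
  obtain ⟨hc0, hc1, hcρ, hcρ'⟩ := hc
  have hindep := linearIndependent_transversalFrame (hdisj 0 1 (by decide)) h.mem_zero h'.mem_zero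
    h.mem_one h'.mem_one hpp hqq hc0
  let e : Basis (Fin 2 ⊕ Fin 2) ℂ C4 := basisOfLinearIndependentOfCardEqFinrank hindep (by simp)
  have he : ⇑e = transversalFrame p q p' q' c :=
    coe_basisOfLinearIndependentOfCardEqFinrank hindep _
  have hline : L = fun i => transversalLine e (chartCoord c ρ i) (chartCoord c ρ' i) := by
    funext i
    refine (Submodule.eq_of_le_of_finrank_le (Submodule.span_le.2 ?_)
      ((hL i).trans_eq (finrank_transversalLine e _ _).symm)).symm
    rw [he]
    rintro _ (rfl | rfl)
    exacts [h.add_chartCoord_smul_mem hc1 hcρ i, h'.add_chartCoord_smul_mem hc1 hcρ' i]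
  rw [hline, finrank_linSys_transversalLine]
  exact (fourPoints_chartCoord hc0 hc1 hcρ hcρ' hρ0 hρ1 hρ0' hρ1' hρ).sum_finrank_triple

end CommonTransversals

section Genericity

open Matrix Module

/-- The line spanned by the two rows of `A`. -/
abbrev rowLine (A : Matrix (Fin 2) (Fin 4) ℂ) : Submodule ℂ C4 := Submodule.span ℂ {A 0, A 1}

lemma vecMul_mem_rowLine (A : Matrix (Fin 2) (Fin 4) ℂ) (x : Fin 2 → ℂ) :
    x ᵥ* A ∈ rowLine A := by
  rw [vecMul_eq_sum, Fin.sum_univ_two]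
  exact Submodule.mem_span_pair.2 ⟨_, _, rfl⟩

section CommRing

variable {R : Type*} [CommRing R]

/-- The matrix with the rows of `A` followed by those of `B`. -/
def stack (A B : Matrix (Fin 2) (Fin 4) R) : Matrix (Fin 4) (Fin 4) R := of ![A 0, A 1, B 0, B 1]

/-- The rows of `frameCoords v w` are the coordinates of the rows of `w` in the basis formed by
the rows of `v 0` and `v 1`, up to the factor `det (stack (v 0) (v 1))`. -/
def frameCoords (v : Fin 4 → Matrix (Fin 2) (Fin 4) R) (w : Matrix (Fin 2) (Fin 4) R) :
    Matrix (Fin 2) (Fin 4) R :=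
  w * (stack (v 0) (v 1)).adjugate

/-- The coordinates of the line `v i` along `v 0`, scaled as in `frameCoords`. -/
def leftCoords (v : Fin 4 → Matrix (Fin 2) (Fin 4) R) (i : Fin 4) : Matrix (Fin 2) (Fin 2) R :=
  (frameCoords v (v i)).submatrix id ![0, 1]

/-- The coordinates of the line `v i` along `v 1`, scaled as in `frameCoords`. -/
def rightCoords (v : Fin 4 → Matrix (Fin 2) (Fin 4) R) (i : Fin 4) : Matrix (Fin 2) (Fin 2) R :=
  (frameCoords v (v i)).submatrix id ![2, 3]

lemma mul_stack (M : Matrix (Fin 2) (Fin 4) R) (A B : Matrix (Fin 2) (Fin 4) R) :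
    M * stack A B = M.submatrix id ![0, 1] * A + M.submatrix id ![2, 3] * B := by
  ext k l
  simp [mul_apply, Fin.sum_univ_four, stack, Fin.sum_univ_two, add_assoc]

lemma leftCoords_mul_add_rightCoords_mul (v : Fin 4 → Matrix (Fin 2) (Fin 4) R) (i : Fin 4) :
    leftCoords v i * v 0 + rightCoords v i * v 1 = (stack (v 0) (v 1)).det • v i := by
  rw [leftCoords, rightCoords, ← mul_stack, frameCoords, Matrix.mul_assoc, adjugate_mul,
    Matrix.mul_smul, Matrix.mul_one]

/-- The row eigenvectors `x` of this matrix correspond to the common transversals of the four lines.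
With `Uᵢ`, `Wᵢ` the left and right coordinates of `v i`, the lines `v 2` and `v 3` are the graphs of
the isomorphisms from `v 0` to `v 1` with matrices `U₂⁻¹ W₂` and `U₃⁻¹ W₃`, and the eigenvector
equation says that these agree up to a scalar at the point `x U₂`. -/
def transversalMatrix (v : Fin 4 → Matrix (Fin 2) (Fin 4) R) : Matrix (Fin 2) (Fin 2) R :=
  leftCoords v 2 * (leftCoords v 3).adjugate * rightCoords v 3 * (rightCoords v 2).adjugate

/-- The polynomial whose nonvanishing makes the four lines general: the lines are pairwise skew and
the transversal matrix has distinct eigenvalues. -/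
def generality (v : Fin 4 → Matrix (Fin 2) (Fin 4) R) : R :=
  (∏ i, ∏ j, if i = j then 1 else (stack (v i) (v j)).det) *
    ((leftCoords v 2).det * (leftCoords v 3).det * (rightCoords v 2).det) *
    ((transversalMatrix v).trace ^ 2 - 4 * (transversalMatrix v).det)

variable {S : Type*} [CommRing S] (f : R →+* S) (v : Fin 4 → Matrix (Fin 2) (Fin 4) R)

lemma map_stack (A B : Matrix (Fin 2) (Fin 4) R) :
    f.mapMatrix (stack A B) = stack (A.map f) (B.map f) := by
  ext k l
  fin_cases k <;> rfl

lemma map_frameCoords (w : Matrix (Fin 2) (Fin 4) R) :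
    (frameCoords v w).map f = frameCoords (fun i => (v i).map f) (w.map f) := by
  rw [frameCoords, Matrix.map_mul, ← RingHom.mapMatrix_apply, RingHom.map_adjugate, map_stack]
  rfl

lemma map_leftCoords (i : Fin 4) :
    f.mapMatrix (leftCoords v i) = leftCoords (fun i => (v i).map f) i := by
  rw [leftCoords, leftCoords, ← map_frameCoords]
  rfl

lemma map_rightCoords (i : Fin 4) :
    f.mapMatrix (rightCoords v i) = rightCoords (fun i => (v i).map f) i := by
  rw [rightCoords, rightCoords, ← map_frameCoords]
  rfl

lemma map_transversalMatrix :
    f.mapMatrix (transversalMatrix v) = transversalMatrix fun i => (v i).map f := by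
  simp only [transversalMatrix, map_mul, RingHom.map_adjugate, map_leftCoords, map_rightCoords]

lemma map_generality : f (generality v) = generality fun i => (v i).map f := by
  have htrace : f (transversalMatrix v).trace = (transversalMatrix fun i => (v i).map f).trace := by
    rw [← map_transversalMatrix]
    exact AddMonoidHom.map_trace f _
  simp only [generality, map_mul, map_sub, map_pow, map_prod, htrace, RingHom.map_det,
    map_leftCoords, map_rightCoords, map_transversalMatrix, apply_ite f, map_one, map_stack,
    map_ofNat]

end CommRing

/-- The `8` coordinates of `4` lines, as independent variables. -/
def genericLines (i : Fin 4) :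
    Matrix (Fin 2) (Fin 4) (MvPolynomial (Fin 4 × Fin 2 × Fin 4) ℂ) :=
  of fun k l => X (i, k, l)

lemma eval_generality_genericLines (v : Fin 4 → Fin 2 → C4) :
    eval (fun p => v p.1 p.2.1 p.2.2) (generality genericLines) = generality fun i => of (v i) := by
  rw [map_generality]
  congr
  ext
  simp [genericLines]

/-- Four lines with the transversals `x₁ = x₃ = 0` and `x₀ = x₂ = 0`, of cross-ratios `2` and
`3`. -/
def sampleLines : Fin 4 → Fin 2 → Fin 4 → ℤ :=
  ![![![1, 0, 0, 0], ![0, 1, 0, 0]], ![![0, 0, 1, 0], ![0, 0, 0, 1]],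
    ![![1, 0, 1, 0], ![0, 1, 0, 1]], ![![1, 0, 2, 0], ![0, 1, 0, 3]]]

lemma generality_genericLines_ne_zero : generality genericLines ≠ 0 := by
  intro h
  have hsample : generality (fun i => of (sampleLines i)) ≠ 0 := by decide +kernel
  have heval := eval_generality_genericLines fun i k l => (sampleLines i k l : ℂ)
  have hcast := map_generality (Int.castRingHom ℂ) fun i => of (sampleLines i)
  rw [h, map_zero] at heval
  exact hsample ((Int.castRingHom ℂ).injective_int (by rw [hcast, map_zero]; exact heval.symm))

section Field

variable {K : Type*} [Field K]

lemma linearIndependent_of_det_stack_ne_zero {A B : Matrix (Fin 2) (Fin 4) K}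
    (h : (stack A B).det ≠ 0) : LinearIndependent K A.row := by
  have hrows : A.row = (stack A B).row ∘ ![0, 1] := by
    ext k : 1
    fin_cases k <;> rfl
  rw [hrows]
  exact (linearIndependent_rows_of_det_ne_zero h).comp _ (by decide)

lemma span_inf_span_of_det_stack_ne_zero {A B : Matrix (Fin 2) (Fin 4) K}
    (h : (stack A B).det ≠ 0) :
    Submodule.span K {A 0, A 1} ⊓ Submodule.span K {B 0, B 1} = ⊥ := by
  have := (linearIndependent_rows_of_det_ne_zero h).disjoint_span_image
    (s := {0, 1}) (t := {2, 3}) (by simp)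
  rw [Set.image_pair, Set.image_pair] at this
  exact this.eq_bot

lemma exists_vecMul_eq_smul_of_root {N : Matrix (Fin 2) (Fin 2) K} {r : K}
    (hr : r ^ 2 - N.trace * r + N.det = 0) : ∃ x ≠ 0, x ᵥ* N = r • x := by
  have hdet : (N - r • (1 : Matrix (Fin 2) (Fin 2) K)).det = 0 := by
    rw [trace_fin_two, det_fin_two] at hr
    simp only [det_fin_two, Matrix.sub_apply, Matrix.smul_apply, one_apply_eq, smul_eq_mul, mul_one,
      ne_eq, zero_ne_one, one_ne_zero, not_false_eq_true, one_apply_ne, mul_zero, sub_zero]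
    linear_combination hr
  obtain ⟨x, hx, hxN⟩ := exists_vecMul_eq_zero_iff.2 hdet
  rw [vecMul_sub, vecMul_smul, vecMul_one, sub_eq_zero] at hxN
  exact ⟨x, hx, hxN⟩

lemma exists_distinct_row_eigenvectors [IsAlgClosed K] [NeZero (2 : K)]
    {N : Matrix (Fin 2) (Fin 2) K} (hN : N.trace ^ 2 - 4 * N.det ≠ 0) :
    ∃ (r r' : K) (x x' : Fin 2 → K),
      r ≠ r' ∧ x ≠ 0 ∧ x' ≠ 0 ∧ x ᵥ* N = r • x ∧ x' ᵥ* N = r' • x' := by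
  obtain ⟨δ, hδ⟩ := IsAlgClosed.exists_pow_nat_eq (N.trace ^ 2 - 4 * N.det) two_pos
  have h2 : (2 : K) ≠ 0 := two_ne_zero
  obtain ⟨x, hx, hxN⟩ := exists_vecMul_eq_smul_of_root (N := N) (r := (N.trace + δ) / 2)
    (by field_simp; linear_combination hδ)
  obtain ⟨x', hx', hxN'⟩ := exists_vecMul_eq_smul_of_root (N := N) (r := (N.trace - δ) / 2)
    (by field_simp; linear_combination hδ)
  refine ⟨_, _, x, x', fun h => hN ?_, hx, hx', hxN, hxN'⟩
  have hδ0 : 2 * δ = 0 := by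
    field_simp at h
    linear_combination h
  rw [← hδ, (mul_eq_zero.1 hδ0).resolve_left h2, zero_pow two_ne_zero]

lemma linearIndependent_pair_of_vecMul_eq_smul {n : Type*} [Fintype n] {N : Matrix n n K}
    {r r' : K} {x x' : n → K} (hr : r ≠ r') (hx : x ≠ 0) (hx' : x' ≠ 0) (hxN : x ᵥ* N = r • x)
    (hxN' : x' ᵥ* N = r' • x') : LinearIndependent K ![x, x'] := by
  refine LinearIndependent.pair_iff.2 fun a b hab => ?_
  have habN : a • r • x + b • r' • x' = 0 := by
    rw [← hxN, ← hxN', ← smul_vecMul, ← smul_vecMul, ← add_vecMul, hab, zero_vecMul]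
  have hax : (a * (r - r')) • x = 0 := by
    calc (a * (r - r')) • x = a • r • x + b • r' • x' - r' • (a • x + b • x') := by module
      _ = 0 := by rw [habN, hab, smul_zero, sub_zero]
  have ha : a = 0 :=
    (mul_eq_zero.1 ((smul_eq_zero.1 hax).resolve_right hx)).resolve_right (sub_ne_zero.2 hr)
  rw [ha, zero_smul, zero_add] at hab
  exact ⟨ha, (smul_eq_zero.1 hab).resolve_right hx'⟩

lemma linearIndependent_pair_vecMul_mul {m n : Type*} [Fintype m] [DecidableEq m]
    {U : Matrix m m K} {V : Matrix m n K} {x x' : m → K} (hU : U.det ≠ 0)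
    (hV : LinearIndependent K V.row) (hx : LinearIndependent K ![x, x']) :
    LinearIndependent K ![x ᵥ* (U * V), x' ᵥ* (U * V)] := by
  have hinj : Function.Injective (U * V).vecMulLinear := by
    have hcomp := (vecMul_injective_iff.2 hV).comp
      (vecMul_injective_iff.2 (linearIndependent_rows_of_det_ne_zero hU))
    convert hcomp using 1
    funext y
    exact (vecMul_vecMul y U V).symm
  have hpair : ![x ᵥ* (U * V), x' ᵥ* (U * V)] = (U * V).vecMulLinear ∘ ![x, x'] := by
    ext k : 1
    fin_cases k <;> rfl
  rw [hpair]
  exact hx.map' _ (LinearMap.ker_eq_bot.2 hinj)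

end Field

variable {v : Fin 4 → Matrix (Fin 2) (Fin 4) ℂ}

lemma isTransversal_of_vecMul_eq_smul {r : ℂ} {x : Fin 2 → ℂ}
    (hU : (leftCoords v 3).det ≠ 0) (hW : (rightCoords v 2).det ≠ 0)
    (hx : x ᵥ* transversalMatrix v = r • x) :
    IsTransversal (fun i => rowLine (v i)) (x ᵥ* (leftCoords v 2 * v 0))
      (x ᵥ* (rightCoords v 2 * v 1)) (r / ((leftCoords v 3).det * (rightCoords v 2).det)) where
  mem_zero := by
    rw [← vecMul_vecMul]
    exact vecMul_mem_rowLine _ _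
  mem_one := by
    rw [← vecMul_vecMul]
    exact vecMul_mem_rowLine _ _
  mem_two := by
    rw [← vecMul_add, leftCoords_mul_add_rightCoords_mul, vecMul_smul]
    exact Submodule.smul_mem _ _ (vecMul_mem_rowLine _ _)
  mem_three := by
    let y := x ᵥ* (leftCoords v 2 * (leftCoords v 3).adjugate)
    have hleft : y ᵥ* leftCoords v 3 = (leftCoords v 3).det • (x ᵥ* leftCoords v 2) := by
      rw [vecMul_vecMul, Matrix.mul_assoc, adjugate_mul, Matrix.mul_smul, Matrix.mul_one,
        vecMul_smul]
    have hright : r • (x ᵥ* rightCoords v 2) = (rightCoords v 2).det • (y ᵥ* rightCoords v 3) := by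
      rw [← smul_vecMul, ← hx, vecMul_vecMul, vecMul_vecMul, transversalMatrix,
        Matrix.mul_assoc _ _ (rightCoords v 2), adjugate_mul, Matrix.mul_smul, Matrix.mul_one,
        vecMul_smul]
    have hpoint : x ᵥ* (leftCoords v 2 * v 0) +
          (r / ((leftCoords v 3).det * (rightCoords v 2).det)) • (x ᵥ* (rightCoords v 2 * v 1)) =
        ((stack (v 0) (v 1)).det / (leftCoords v 3).det) • (y ᵥ* v 3) := by
      have hy := congrArg (y ᵥ* ·) (leftCoords_mul_add_rightCoords_mul v 3)
      simp only [vecMul_add, ← vecMul_vecMul, hleft, vecMul_smul, smul_vecMul] at hy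
      rw [div_eq_inv_mul, div_eq_inv_mul, mul_smul, mul_smul, ← hy, ← vecMul_vecMul,
        ← vecMul_vecMul, ← smul_vecMul r, hright, smul_vecMul]
      match_scalars <;> field_simp
    rw [hpoint]
    exact Submodule.smul_mem _ _ (vecMul_mem_rowLine _ _)

lemma det_stack_ne_zero_of_generality_ne_zero (h : generality v ≠ 0) {i j : Fin 4} (hij : i ≠ j) :
    (stack (v i) (v j)).det ≠ 0 := by
  have hprod := left_ne_zero_of_mul (left_ne_zero_of_mul h)
  rw [Finset.prod_ne_zero_iff] at hprod
  have hi := hprod i (Finset.mem_univ i)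
  rw [Finset.prod_ne_zero_iff] at hi
  simpa only [if_neg hij] using hi j (Finset.mem_univ j)

lemma finrank_rowLine_le (A : Matrix (Fin 2) (Fin 4) ℂ) : finrank ℂ (rowLine A) ≤ 2 := by
  have := finrank_range_le_card (R := ℂ) ![A 0, A 1]
  rwa [Matrix.range_cons_cons_empty, Fintype.card_fin] at this

lemma finrank_linSys_triple_of_generality_ne_zero (h : generality v ≠ 0) :
    finrank ℂ (linSys 10 (fun i => rowLine (v i)) fun _ => 3) = 56 := by
  have hstack {i j : Fin 4} := det_stack_ne_zero_of_generality_ne_zero (i := i) (j := j) h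
  have hdets := right_ne_zero_of_mul (left_ne_zero_of_mul h)
  have hU₂ := left_ne_zero_of_mul (left_ne_zero_of_mul hdets)
  have hU₃ := right_ne_zero_of_mul (left_ne_zero_of_mul hdets)
  have hW₂ := right_ne_zero_of_mul hdets
  obtain ⟨r, r', x, x', hr, hx0, hx0', hx, hx'⟩ :=
    exists_distinct_row_eigenvectors (right_ne_zero_of_mul h)
  have hxx := linearIndependent_pair_of_vecMul_eq_smul hr hx0 hx0' hx hx'
  refine finrank_linSys_triple_of_isTransversal (fun i => finrank_rowLine_le (v i))
    (fun i j hij => span_inf_span_of_det_stack_ne_zero (hstack hij))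
    (isTransversal_of_vecMul_eq_smul hU₃ hW₂ hx) (isTransversal_of_vecMul_eq_smul hU₃ hW₂ hx')
    (fun hρ => hr ((div_left_inj' (mul_ne_zero hU₃ hW₂)).1 hρ))
    (linearIndependent_pair_vecMul_mul hU₂ ?_ hxx) (linearIndependent_pair_vecMul_mul hW₂ ?_ hxx)
  exacts [linearIndependent_of_det_stack_ne_zero (hstack (j := 1) (by decide)),
    linearIndependent_of_det_stack_ne_zero (hstack (j := 0) (by decide))]

end Genericity

/-- For four general lines in `P^3`, the system `𝓛_{10}(3,3,3,3)` of degree-10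
forms with multiplicity 3 along each line has dimension exactly 56, although the
virtual dimension is `binom(13,3) - 4·58 = 286 - 232 = 54`; hence the system is
special. -/
theorem stmt_18 :
    GeneralLines 4 (fun L =>
      Module.finrank ℂ ↥(linSys 10 L ![3, 3, 3, 3]) = 56) ∧
    Nat.choose 13 3 - 4 * 58 = 54 := by
  refine ⟨⟨generality genericLines, generality_genericLines_ne_zero, fun v hv => ?_⟩, by decide⟩
  rw [eval_generality_genericLines] at hv
  have hstack {i j : Fin 4} (hij : i ≠ j) := det_stack_ne_zero_of_generality_ne_zero hv hij
  have hmult : (![3, 3, 3, 3] : Fin 4 → ℕ) = fun _ => 3 := by decide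
  refine ⟨fun i => ?_, fun i j hij => span_inf_span_of_det_stack_ne_zero (hstack hij), ?_⟩
  · obtain ⟨j, hj⟩ := exists_ne i
    have hrows := linearIndependent_of_det_stack_ne_zero (hstack hj.symm)
    rwa [← FinVec.etaExpand_eq (Matrix.row _)] at hrows
  · rw [hmult]
    exact finrank_linSys_triple_of_generality_ne_zero hv
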